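/- Assume (H1)–(H6). For every ω ∈ Ω, μ > Ã(ω), x ∈ ℝ and 0 ≤ t ≤ s, the reachable (sublevel) sets R_{μ,t}^ω = {y ∈ ℝ : m_μ(y,x,ω) ≤ t} satisfy dist_H(R_{μ,t}^ω, R_{μ,s}^ω) ≤ (s − t)/l_μ, where dist_H denotes the Hausdorff distance. -/

import Mathlib

open MeasureTheory ProbabilityTheory Set Filter Topology

noncomputable section

variable {Ω : Type*}

/-! ### Viscosity solutions of stationary Hamilton-Jacobi equations -/

/-- Viscosity subsolution of `G(Du, y) ≤ μ` on the set `U`. -/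
def IsViscSubsol (G : ℝ → ℝ → ℝ) (μ : ℝ) (U : Set ℝ) (u : ℝ → ℝ) : Prop :=
  ∀ φ : ℝ → ℝ, ContDiff ℝ 1 φ → ∀ y₀ ∈ U,
    IsLocalMaxOn (fun y => u y - φ y) U y₀ → G (deriv φ y₀) y₀ ≤ μ

/-- Viscosity supersolution of `G(Du, y) ≥ μ` on the set `U`. -/
def IsViscSupersol (G : ℝ → ℝ → ℝ) (μ : ℝ) (U : Set ℝ) (u : ℝ → ℝ) : Prop :=
  ∀ φ : ℝ → ℝ, ContDiff ℝ 1 φ → ∀ y₀ ∈ U,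
    IsLocalMinOn (fun y => u y - φ y) U y₀ → μ ≤ G (deriv φ y₀) y₀

/-- Viscosity solution of `G(Du, y) = μ` on the set `U`. -/
def IsViscSol (G : ℝ → ℝ → ℝ) (μ : ℝ) (U : Set ℝ) (u : ℝ → ℝ) : Prop :=
  IsViscSubsol G μ U u ∧ IsViscSupersol G μ U u

/-- Globally Lipschitz real function. -/
def IsLip (v : ℝ → ℝ) : Prop := ∃ K : NNReal, LipschitzWith K v

/-- Assumptions (H1)–(H6) on a random Hamiltonian `H = H(p, y, ω)`. -/
structure HamHyp [MeasurableSpace Ω] (H : ℝ → ℝ → Ω → ℝ) : Prop where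
  meas : Measurable fun q : ℝ × ℝ × Ω => H q.1 q.2.1 q.2.2
  lip_p : ∃ K : NNReal, ∀ (y : ℝ) (ω : Ω), LipschitzWith K fun p => H p y ω
  bounds : ∃ c₀ C₀ γ : ℝ, 0 < c₀ ∧ 0 < C₀ ∧ 0 < γ ∧
    ∀ (p y : ℝ) (ω : Ω), -c₀ * |p + γ| ≤ H p y ω ∧ H p y ω ≤ C₀ * |p + γ|
  coercive : ∀ M : ℝ, ∃ R : ℝ, ∀ (p y : ℝ) (ω : Ω), R ≤ |p| → M ≤ H p y ω
  modulus : ∃ w : ℝ → ℝ, Monotone w ∧ w 0 = 0 ∧ ContinuousAt w 0 ∧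
    ∀ (p x y : ℝ) (ω : Ω), |H p y ω - H p x ω| ≤ w (|x - y| * (1 + |p|))
  convex_p : ∀ (y : ℝ) (ω : Ω), ConvexOn ℝ Set.univ fun p => H p y ω
  min_at_zero : ∀ (p y : ℝ) (ω : Ω), H 0 y ω ≤ H p y ω

/-- The stochastic flux limiter `Ã(ω)`: the smallest `μ` such that the equation
`H(Dv, y, ω) ≤ μ` admits a globally Lipschitz viscosity subsolution on `ℝ`. -/
def fluxLimiter (H : ℝ → ℝ → Ω → ℝ) (ω : Ω) : ℝ :=
  sInf {μ : ℝ | ∃ v : ℝ → ℝ, IsLip v ∧ IsViscSubsol (fun p y => H p y ω) μ Set.univ v}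

/-- The maximal subsolution `m_μ(y, x, ω)` of the metric problem. -/
def metricSol (H : ℝ → ℝ → Ω → ℝ) (μ : ℝ) (ω : Ω) (y x : ℝ) : ℝ :=
  sSup {r : ℝ | ∃ v : ℝ → ℝ, IsLip v ∧
    IsViscSubsol (fun p y => H p y ω) μ Set.univ v ∧ r = v y - v x}

/-! ### Stochastic framework -/

/-- Stationarity (H8) of a Hamiltonian with respect to a translation group `τ`. -/
def Stationary (τ : ℝ → Ω → Ω) (H : ℝ → ℝ → Ω → ℝ) : Prop :=
  ∀ (p y z : ℝ) (ω : Ω), H p (y + z) ω = H p y (τ z ω)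

/-- An ergodic group of measure-preserving transformations of `(Ω, F, P)`. -/
structure ErgodicSetup [MeasurableSpace Ω] (P : Measure Ω) (τ : ℝ → Ω → Ω) : Prop where
  meas : ∀ z, Measurable (τ z)
  preserving : ∀ z, MeasurePreserving (τ z) P P
  add : ∀ x z : ℝ, τ (x + z) = τ x ∘ τ z
  ergodic : ∀ A : Set Ω, MeasurableSet A → (∀ z, τ z ⁻¹' A = A) → P A = 0 ∨ P A = 1

/-- σ-algebra generated by the maps `ω ↦ H(p, y, ω)`, `y ∈ U`, `p ∈ ℝ`. -/
def genSigma [MeasurableSpace Ω] (H : ℝ → ℝ → Ω → ℝ) (U : Set ℝ) : MeasurableSpace Ω :=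
  ⨆ y ∈ U, ⨆ p : ℝ, MeasurableSpace.comap (fun ω => H p y ω) inferInstance

/-- Unit range of dependence (H9). -/
def UnitRangeDep [MeasurableSpace Ω] (P : Measure Ω) (H : ℝ → ℝ → Ω → ℝ) : Prop :=
  ∀ U V : Set ℝ, MeasurableSet U → MeasurableSet V →
    (∀ x ∈ U, ∀ y ∈ V, 1 ≤ |x - y|) →
    ProbabilityTheory.Indep (genSigma H U) (genSigma H V) P

/-! ### The decompositions (H7-WFL) and (H7-ε) for a family `H ε` of Hamiltonians -/

/-- (H7-WFL). -/
def DecompWFL (HL HR : ℝ → ℝ → Ω → ℝ) (H : ℝ → ℝ → ℝ → Ω → ℝ) : Prop :=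
  ∃ φ : ℝ → ℝ, ContDiff ℝ (⊤ : ℕ∞) φ ∧ Antitone φ ∧
    (∀ y : ℝ, y ≤ -1 → φ y = 1) ∧ (∀ y : ℝ, 1 ≤ y → φ y = 0) ∧
    ∀ (ε p y : ℝ) (ω : Ω), H ε p y ω = φ y * HL p y ω + (1 - φ y) * HR p y ω

/-- (H7-ε). -/
def DecompEps (HL HR H0 : ℝ → ℝ → Ω → ℝ) (H : ℝ → ℝ → ℝ → Ω → ℝ) : Prop :=
  (∀ (p y : ℝ) (ω : Ω), HL p y ω ≤ H0 p y ω ∧ HR p y ω ≤ H0 p y ω) ∧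
  ∃ ψ : ℝ → ℝ → ℝ,
    (∀ ε : ℝ, 0 < ε → ContDiff ℝ (⊤ : ℕ∞) (ψ ε) ∧
      (∀ y : ℝ, 2 / Real.sqrt ε < y → ψ ε y = 1) ∧
      (∀ y : ℝ, y < 1 / Real.sqrt ε → ψ ε y = 0)) ∧
    ∀ ε : ℝ, 0 < ε → ∀ (p y : ℝ) (ω : Ω), H ε p y ω =
      ψ ε (-y) * HL p y ω + (1 - ψ ε (-y)) * (1 - ψ ε y) * H0 p y ω + ψ ε y * HR p y ω

/-! ### Effective Hamiltonians -/

/-- The effective Hamiltonian `H̄_α(p)` at a fixed `ω`: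
`inf` of the `μ` for which `H_α(p + Dv, y, ω) ≤ μ` has a Lipschitz, strictly sublinear
viscosity subsolution. -/
def effectiveHam (Hα : ℝ → ℝ → Ω → ℝ) (ω : Ω) (p : ℝ) : ℝ :=
  sInf {μ : ℝ | ∃ v : ℝ → ℝ, IsLip v ∧
    Tendsto (fun y => v y / |y|) (cocompact ℝ) (𝓝 0) ∧
    IsViscSubsol (fun q y => Hα q y ω) μ Set.univ fun y => p * y + v y}

/-- Non-decreasing part of a (convex coercive) Hamiltonian. -/
def Hplus (G : ℝ → ℝ) (p : ℝ) : ℝ := if 0 ≤ p then G p else sInf (Set.range G)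

/-- Non-increasing part of a (convex coercive) Hamiltonian. -/
def Hminus (G : ℝ → ℝ) (p : ℝ) : ℝ := if p ≤ 0 then G p else sInf (Set.range G)

/-! ### The approximated corrector equation -/

/-- Viscosity solution of `δ v + G(Dv, y) = 0` on `ℝ`. -/
def IsViscSolDelta (G : ℝ → ℝ → ℝ) (δ : ℝ) (v : ℝ → ℝ) : Prop :=
  (∀ φ : ℝ → ℝ, ContDiff ℝ 1 φ → ∀ y₀ : ℝ, IsLocalMax (fun y => v y - φ y) y₀ →
    δ * v y₀ + G (deriv φ y₀) y₀ ≤ 0) ∧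
  (∀ φ : ℝ → ℝ, ContDiff ℝ 1 φ → ∀ y₀ : ℝ, IsLocalMin (fun y => v y - φ y) y₀ →
    0 ≤ δ * v y₀ + G (deriv φ y₀) y₀)

/-! ### Evolutive Hamilton–Jacobi equations -/

/-- Viscosity subsolution of `u_t + G(Du, y) = 0` on `(0,T) × ℝ`. -/
def IsViscSubsolEvol (G : ℝ → ℝ → ℝ) (T : ℝ) (u : ℝ → ℝ → ℝ) : Prop :=
  ∀ φ : ℝ × ℝ → ℝ, ContDiff ℝ 1 φ → ∀ t₀ x₀ : ℝ, 0 < t₀ → t₀ < T →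
    IsLocalMaxOn (fun q : ℝ × ℝ => u q.1 q.2 - φ q) (Set.Ioo 0 T ×ˢ Set.univ) (t₀, x₀) →
    deriv (fun t => φ (t, x₀)) t₀ + G (deriv (fun x => φ (t₀, x)) x₀) x₀ ≤ 0

/-- Viscosity supersolution of `u_t + G(Du, y) = 0` on `(0,T) × ℝ`. -/
def IsViscSupersolEvol (G : ℝ → ℝ → ℝ) (T : ℝ) (u : ℝ → ℝ → ℝ) : Prop :=
  ∀ φ : ℝ × ℝ → ℝ, ContDiff ℝ 1 φ → ∀ t₀ x₀ : ℝ, 0 < t₀ → t₀ < T →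
    IsLocalMinOn (fun q : ℝ × ℝ => u q.1 q.2 - φ q) (Set.Ioo 0 T ×ˢ Set.univ) (t₀, x₀) →
    0 ≤ deriv (fun t => φ (t, x₀)) t₀ + G (deriv (fun x => φ (t₀, x)) x₀) x₀

/-! ### The junction problem -/

/-- Test functions for the junction problem: continuous, `C¹` on each side of the junction. -/
def IsPiecewiseC1 (φ : ℝ × ℝ → ℝ) : Prop :=
  Continuous φ ∧ ContDiffOn ℝ 1 φ {q : ℝ × ℝ | q.2 ≤ 0} ∧
    ContDiffOn ℝ 1 φ {q : ℝ × ℝ | 0 ≤ q.2}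

/-- Viscosity subsolution of the junction problem with flux limiter `A`. -/
def IsJunctionSubsol (HLb HRb : ℝ → ℝ) (A T : ℝ) (u : ℝ → ℝ → ℝ) : Prop :=
  ∀ φ : ℝ × ℝ → ℝ, IsPiecewiseC1 φ → ∀ t₀ x₀ : ℝ, 0 < t₀ → t₀ < T →
    IsLocalMaxOn (fun q : ℝ × ℝ => u q.1 q.2 - φ q) (Set.Ioo 0 T ×ˢ Set.univ) (t₀, x₀) →
    (x₀ < 0 → deriv (fun t => φ (t, x₀)) t₀ + HLb (deriv (fun x => φ (t₀, x)) x₀) ≤ 0) ∧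
    (0 < x₀ → deriv (fun t => φ (t, x₀)) t₀ + HRb (deriv (fun x => φ (t₀, x)) x₀) ≤ 0) ∧
    (x₀ = 0 → deriv (fun t => φ (t, 0)) t₀ +
      max A (max (Hplus HLb (derivWithin (fun x => φ (t₀, x)) (Set.Iic 0) 0))
        (Hminus HRb (derivWithin (fun x => φ (t₀, x)) (Set.Ici 0) 0))) ≤ 0)

/-- Viscosity supersolution of the junction problem with flux limiter `A`. -/
def IsJunctionSupersol (HLb HRb : ℝ → ℝ) (A T : ℝ) (u : ℝ → ℝ → ℝ) : Prop :=
  ∀ φ : ℝ × ℝ → ℝ, IsPiecewiseC1 φ → ∀ t₀ x₀ : ℝ, 0 < t₀ → t₀ < T →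
    IsLocalMinOn (fun q : ℝ × ℝ => u q.1 q.2 - φ q) (Set.Ioo 0 T ×ˢ Set.univ) (t₀, x₀) →
    (x₀ < 0 → 0 ≤ deriv (fun t => φ (t, x₀)) t₀ + HLb (deriv (fun x => φ (t₀, x)) x₀)) ∧
    (0 < x₀ → 0 ≤ deriv (fun t => φ (t, x₀)) t₀ + HRb (deriv (fun x => φ (t₀, x)) x₀)) ∧
    (x₀ = 0 → 0 ≤ deriv (fun t => φ (t, 0)) t₀ +
      max A (max (Hplus HLb (derivWithin (fun x => φ (t₀, x)) (Set.Iic 0) 0))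
        (Hminus HRb (derivWithin (fun x => φ (t₀, x)) (Set.Ici 0) 0))))

/-- Solution of the limit junction problem with initial datum `u₀`. -/
def IsJunctionSol (HLb HRb : ℝ → ℝ) (A T : ℝ) (u₀ : ℝ → ℝ) (u : ℝ → ℝ → ℝ) : Prop :=
  ContinuousOn (fun q : ℝ × ℝ => u q.1 q.2) (Set.Ico 0 T ×ˢ Set.univ) ∧
  (∀ y, u 0 y = u₀ y) ∧
  IsJunctionSubsol HLb HRb A T u ∧ IsJunctionSupersol HLb HRb A T u

/-!
Two Lipschitz subsolutions glued at a point `z` give a subsolution: if a `C¹` function touches the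
glued function from above at `z` with slope `p`, then it touches the left piece from the left and
the right piece from the right. For a continuous Hamiltonian that is quasiconvex in `p` with minimum
at `p = 0`, contact from the left suffices when `0 ≤ p` (perturb the test function by a steep cubic,
which only increases its slope), and contact from the right suffices when `p ≤ 0`. Hence the maximal
subsolution is additive along intervals, `m(y, x) = m(y, z) + m(z, x)` for `z` between `x` and `y`.
If now `t < m(y, x) ≤ s`, take `z` between `x` and `y` with `m(z, x) = t`; then
`l |y - z| ≤ m(y, z) = m(y, x) - t ≤ s - t`.
-/

lemma hausdorffDist_sublevel_le {E : Type*} [SeminormedAddCommGroup E] [NormedSpace ℝ E]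
    {f : E → ℝ} (hf : Continuous f) {x : E} {l s t : ℝ} (hl : 0 < l)
    (hgrowth : ∀ y, ∀ z ∈ segment ℝ x y, l * dist y z ≤ f y - f z)
    (hx : f x ≤ t) (hts : t ≤ s) :
    Metric.hausdorffDist {y | f y ≤ t} {y | f y ≤ s} ≤ (s - t) / l := by
  have hr : 0 ≤ (s - t) / l := div_nonneg (sub_nonneg.2 hts) hl.le
  refine Metric.hausdorffDist_le_of_mem_dist hr
    (fun y hy => ⟨y, le_trans hy hts, by simpa using hr⟩) fun y (hy : f y ≤ s) => ?_
  rcases le_total (f y) t with hyt | hyt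
  · exact ⟨y, hyt, by simpa using hr⟩
  · obtain ⟨z, hz, hzt⟩ := (convex_segment x y).isPreconnected.intermediate_value
      (left_mem_segment ℝ x y) (right_mem_segment ℝ x y) hf.continuousOn ⟨hx, hyt⟩
    refine ⟨z, hzt.le, (le_div_iff₀' hl).2 ?_⟩
    linarith [hgrowth y z hz]

/-- A deterministic Hamiltonian `G(p, y)`, separately continuous and, for each `y`, quasiconvex in
`p` with minimum at `p = 0`; the last two properties are encoded as monotonicity along the segments
issued from `0`. This is the class for which Lipschitz subsolutions can be glued. -/
structure QuasiconvexHam (G : ℝ → ℝ → ℝ) : Prop where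
  continuous_momentum : ∀ y, Continuous fun p => G p y
  continuous_space : ∀ p, Continuous (G p)
  le_of_mem_uIcc : ∀ {p q : ℝ} (y : ℝ), p ∈ uIcc 0 q → G p y ≤ G q y

lemma HamHyp.continuous_space [MeasurableSpace Ω] {H : ℝ → ℝ → Ω → ℝ} (hH : HamHyp H) (p : ℝ)
    (ω : Ω) : Continuous fun y => H p y ω := by
  obtain ⟨w, -, hw₀, hw, hmod⟩ := hH.modulus
  refine continuous_iff_continuousAt.2 fun x => tendsto_iff_dist_tendsto_zero.2 ?_
  have harg : Tendsto (fun y => |x - y| * (1 + |p|)) (𝓝 x) (𝓝 0) := by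
    have : Continuous fun y => |x - y| * (1 + |p|) := by fun_prop
    simpa using this.tendsto x
  have hmodulus : Tendsto (fun y => w (|x - y| * (1 + |p|))) (𝓝 x) (𝓝 0) := by
    simpa only [hw₀, Function.comp_def] using hw.tendsto.comp harg
  exact squeeze_zero (fun _ => dist_nonneg) (fun y => hmod p x y ω) hmodulus

lemma HamHyp.quasiconvexHam [MeasurableSpace Ω] {H : ℝ → ℝ → Ω → ℝ} (hH : HamHyp H) (ω : Ω) :
    QuasiconvexHam fun p y => H p y ω where
  continuous_momentum y := by
    obtain ⟨K, hK⟩ := hH.lip_p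
    exact (hK y ω).continuous
  continuous_space p := hH.continuous_space p ω
  le_of_mem_uIcc {p q} y hp :=
    calc H p y ω ≤ max (H 0 y ω) (H q y ω) :=
          (hH.convex_p y ω).le_max_of_mem_segment (mem_univ _) (mem_univ _)
            (segment_eq_uIcc 0 q ▸ hp)
      _ = H q y ω := max_eq_right (hH.min_at_zero q y ω)

lemma QuasiconvexHam.comp_neg {G : ℝ → ℝ → ℝ} (hG : QuasiconvexHam G) :
    QuasiconvexHam fun p y => G (-p) (-y) where
  continuous_momentum y := (hG.continuous_momentum (-y)).comp continuous_neg
  continuous_space p := (hG.continuous_space (-p)).comp continuous_neg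
  le_of_mem_uIcc y hp := hG.le_of_mem_uIcc (-y) (by
    simpa only [mem_uIcc, neg_nonneg, neg_nonpos, neg_le_neg_iff, and_comm, or_comm] using hp)

lemma QuasiconvexHam.exists_lt_eventually_forall_ge {G : ℝ → ℝ → ℝ} (hG : QuasiconvexHam G)
    {μ p z : ℝ} (hp : 0 ≤ p) (hμ : μ < G p z) :
    ∃ q < p, ∀ᶠ y in 𝓝 z, ∀ r ≥ q, μ < G r y := by
  have hcont : Continuous fun q => G (max 0 q) z :=
    (hG.continuous_momentum z).comp (continuous_const.max continuous_id)
  have hnear : ∀ᶠ q in 𝓝[<] p, μ < G (max 0 q) z :=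
    nhdsWithin_le_nhds (hcont.continuousAt.eventually_const_lt (by simpa only [max_eq_right hp]))
  obtain ⟨q, hq, hqp⟩ := (hnear.and self_mem_nhdsWithin).exists
  refine ⟨q, hqp, ?_⟩
  filter_upwards [(hG.continuous_space (max 0 q)).continuousAt.eventually_const_lt hq]
    with y hy r hr
  refine hy.trans_le (hG.le_of_mem_uIcc y (mem_uIcc.2 ?_))
  rcases le_total 0 r with hr₀ | hr₀
  · exact .inl ⟨le_max_left _ _, max_le hr₀ hr⟩
  · rw [max_eq_left (hr.trans hr₀)]
    exact .inr ⟨hr₀, le_rfl⟩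

lemma exists_cubic_penalty {u : ℝ → ℝ} {z δ ε : ℝ} (hu : IsLocalMaxOn u (Iic z) z)
    (hδ : 0 < δ) (hε : 0 < ε) :
    ∃ N ≥ 0, ∃ a ∈ Ioo (z - δ) z, ∃ c ∈ Ioo z (z + δ),
      u a - (N * (a - z) ^ 3 - ε * (a - z)) < u z ∧
      u c - (N * (c - z) ^ 3 - ε * (c - z)) < u z := by
  obtain ⟨c, hzc, hcδ⟩ := exists_between (lt_add_of_pos_right z hδ)
  have hcz : 0 < c - z := sub_pos.2 hzc
  obtain ⟨N, hN₀, hN⟩ : ∃ N ≥ 0, u c - u z + ε * (c - z) < N * (c - z) ^ 3 := by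
    refine ⟨(|u c - u z + ε * (c - z)| + 1) / (c - z) ^ 3, by positivity, ?_⟩
    rw [div_mul_cancel₀ _ (pow_pos hcz 3).ne']
    exact (le_abs_self _).trans_lt (lt_add_one _)
  have hsmall : ∀ᶠ a in 𝓝[<] z, N * (a - z) ^ 2 < ε := by
    have : Continuous fun a => N * (a - z) ^ 2 := by fun_prop
    exact nhdsWithin_le_nhds (this.continuousAt.eventually_lt_const (by simpa using hε))
  have hmax : ∀ᶠ a in 𝓝[<] z, u a ≤ u z := nhdsWithin_mono z Iio_subset_Iic_self hu
  obtain ⟨a, haN, hau, ha⟩ :=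
    (hsmall.and (hmax.and (Ioo_mem_nhdsLT (sub_lt_self z hδ)))).exists
  refine ⟨N, hN₀, a, ha, c, ⟨hzc, hcδ⟩, ?_, by linarith⟩
  have hcubic : 0 < (ε - N * (a - z) ^ 2) * (z - a) :=
    mul_pos (sub_pos.2 haN) (sub_pos.2 ha.2)
  linarith [show (ε - N * (a - z) ^ 2) * (z - a) = N * (a - z) ^ 3 - ε * (a - z) by ring]

namespace IsViscSubsol

variable {G : ℝ → ℝ → ℝ} {μ z : ℝ} {v v₁ v₂ φ : ℝ → ℝ}

lemma exists_mem_Ioo_le {a b c : ℝ} (h : IsViscSubsol G μ univ v) (hv : Continuous v)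
    (hφ : ContDiff ℝ 1 φ) (hb : b ∈ Icc a c) (ha : v a - φ a < v b - φ b)
    (hc : v c - φ c < v b - φ b) :
    ∃ y ∈ Ioo a c, G (deriv φ y) y ≤ μ := by
  have hends : ∀ y ∈ Icc a c \ Ioo a c, v y - φ y < v b - φ b := by
    rw [Icc_sdiff_Ioo_same (hb.1.trans hb.2)]
    rintro y (rfl | rfl)
    exacts [ha, hc]
  obtain ⟨y, hy, hmax⟩ := isCompact_Icc.exists_isLocalMax_mem_open Ioo_subset_Icc_self
    (hv.sub hφ.continuous).continuousOn hb hends isOpen_Ioo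
  exact ⟨y, hy, h φ hφ y (mem_univ y) (hmax.on univ)⟩

lemma le_of_isLocalMaxOn_Iic (h : IsViscSubsol G μ univ v) (hG : QuasiconvexHam G)
    (hv : Continuous v) (hφ : ContDiff ℝ 1 φ) (hmax : IsLocalMaxOn (fun y => v y - φ y) (Iic z) z)
    (hp : 0 ≤ deriv φ z) : G (deriv φ z) z ≤ μ := by
  by_contra! hlt
  obtain ⟨q, hqp, hq⟩ := hG.exists_lt_eventually_forall_ge hp hlt
  obtain ⟨q', hqq', hq'p⟩ := exists_between hqp
  have hslope : ∀ᶠ y in 𝓝 z, q' < deriv φ y :=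
    (hφ.continuous_deriv le_rfl).continuousAt.eventually_const_lt hq'p
  obtain ⟨δ, hδ, hball⟩ := Metric.eventually_nhds_iff.1 (hq.and hslope)
  obtain ⟨N, hN, a, ha, c, hc, hua, huc⟩ := exists_cubic_penalty hmax hδ (sub_pos.2 hqq')
  let ψ : ℝ → ℝ := fun y => φ y + (N * (y - z) ^ 3 - (q' - q) * (y - z))
  have hψ : ContDiff ℝ 1 ψ := by fun_prop
  have hψz : ψ z = φ z := by simp [ψ]
  obtain ⟨y, hy, hyμ⟩ := h.exists_mem_Ioo_le hv hψ ⟨ha.2.le, hc.1.le⟩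
    (by rw [hψz]; simp only [ψ]; linarith) (by rw [hψz]; simp only [ψ]; linarith)
  have hψ' : deriv ψ y = deriv φ y + (N * (3 * (y - z) ^ 2) - (q' - q)) := by
    have hid : HasDerivAt (fun y => y - z) 1 y := (hasDerivAt_id y).sub_const z
    have hφy := (hφ.differentiable one_ne_zero y).hasDerivAt
    have hψy : HasDerivAt ψ _ y :=
      hφy.add (((hid.pow 3).const_mul N).sub (hid.const_mul (q' - q)))
    simpa using hψy.deriv
  obtain ⟨hyq, hyφ⟩ := hball (y := y) (by
    rw [Real.dist_eq, abs_lt]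
    constructor <;> linarith [hy.1, hy.2, ha.1, hc.2])
  have hsteep : q ≤ deriv ψ y := by
    have : 0 ≤ N * (3 * (y - z) ^ 2) := by positivity
    linarith
  exact (hyq _ hsteep).not_ge hyμ

lemma comp_neg (h : IsViscSubsol G μ univ v) :
    IsViscSubsol (fun p y => G (-p) (-y)) μ univ fun y => v (-y) := by
  intro φ hφ y₀ _ hmax
  have hmax' : IsLocalMax (fun y => v y - φ (-y)) (-y₀) := by
    have hneg : Tendsto (fun y : ℝ => -y) (𝓝 (-y₀)) (𝓝 y₀) := by
      simpa using (continuous_neg (G := ℝ)).tendsto (-y₀)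
    filter_upwards [hneg.eventually (isLocalMaxOn_univ_iff.1 hmax)] with y hy
    simpa using hy
  simpa [deriv_comp_neg] using
    h (fun y => φ (-y)) (hφ.comp contDiff_neg) (-y₀) (mem_univ _) (hmax'.on univ)

lemma le_of_isLocalMaxOn_Ici (h : IsViscSubsol G μ univ v) (hG : QuasiconvexHam G)
    (hv : Continuous v) (hφ : ContDiff ℝ 1 φ) (hmax : IsLocalMaxOn (fun y => v y - φ y) (Ici z) z)
    (hp : deriv φ z ≤ 0) : G (deriv φ z) z ≤ μ := by
  have hmax' : IsLocalMaxOn (fun y => v (-y) - φ (-y)) (Iic (-z)) (-z) := by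
    have hneg : Tendsto (fun y : ℝ => -y) (𝓝[≤] (-z)) (𝓝[≥] z) := by
      simpa using tendsto_neg_nhdsLE (a := -z)
    filter_upwards [hneg.eventually hmax] with y hy
    simpa using hy
  have hderiv : deriv (fun y => φ (-y)) (-z) = -deriv φ z := by rw [deriv_comp_neg, neg_neg]
  have hle := h.comp_neg.le_of_isLocalMaxOn_Iic (φ := fun y => φ (-y)) hG.comp_neg
    (hv.comp continuous_neg) (hφ.comp contDiff_neg) hmax' (hderiv ▸ neg_nonneg.2 hp)
  rwa [hderiv, neg_neg, neg_neg] at hle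

end IsViscSubsol

/-- The function with the increments of `v₁` to the left of `z` and those of `v₂` to the right,
used to concatenate subsolutions. Its value at `z` is normalised to `v₁ z + v₂ z`, which makes it a
sum of two compositions and keeps the formula free of case distinctions. -/
def glueAt (z : ℝ) (v₁ v₂ : ℝ → ℝ) (y : ℝ) : ℝ :=
  v₁ (min y z) + v₂ (max y z)

section Glue

variable {G : ℝ → ℝ → ℝ} {μ z y : ℝ} {v₁ v₂ : ℝ → ℝ}

lemma glueAt_of_le (hy : y ≤ z) : glueAt z v₁ v₂ y = v₁ y + v₂ z := by
  rw [glueAt, min_eq_left hy, max_eq_right hy]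

lemma glueAt_of_ge (hy : z ≤ y) : glueAt z v₁ v₂ y = v₁ z + v₂ y := by
  rw [glueAt, min_eq_right hy, max_eq_left hy]

lemma IsLip.glueAt (h₁ : IsLip v₁) (h₂ : IsLip v₂) (z : ℝ) : IsLip (glueAt z v₁ v₂) := by
  obtain ⟨K₁, hK₁⟩ := h₁
  obtain ⟨K₂, hK₂⟩ := h₂
  exact ⟨_, (hK₁.comp (LipschitzWith.id.min_const z)).add
    (hK₂.comp (LipschitzWith.id.max_const z))⟩

lemma isLocalMaxOn_left_of_glueAt {φ : ℝ → ℝ} {s : Set ℝ} (hs : s ⊆ Iic z) (hy : y ∈ s)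
    (hmax : IsLocalMaxOn (fun x => glueAt z v₁ v₂ x - φ x) s y) :
    IsLocalMaxOn (fun x => v₁ x - φ x) s y := by
  filter_upwards [hmax, self_mem_nhdsWithin] with x hx hxs
  rw [glueAt_of_le (hs hxs), glueAt_of_le (hs hy)] at hx
  linarith

lemma isLocalMaxOn_right_of_glueAt {φ : ℝ → ℝ} {s : Set ℝ} (hs : s ⊆ Ici z) (hy : y ∈ s)
    (hmax : IsLocalMaxOn (fun x => glueAt z v₁ v₂ x - φ x) s y) :
    IsLocalMaxOn (fun x => v₂ x - φ x) s y := by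
  filter_upwards [hmax, self_mem_nhdsWithin] with x hx hxs
  rw [glueAt_of_ge (hs hxs), glueAt_of_ge (hs hy)] at hx
  linarith

lemma IsViscSubsol.glueAt (hG : QuasiconvexHam G) (h₁ : IsViscSubsol G μ univ v₁)
    (h₂ : IsViscSubsol G μ univ v₂) (hv₁ : Continuous v₁) (hv₂ : Continuous v₂) (z : ℝ) :
    IsViscSubsol G μ univ (glueAt z v₁ v₂) := by
  intro φ hφ y _ hmax
  rw [isLocalMaxOn_univ_iff] at hmax
  rcases lt_trichotomy y z with hyz | rfl | hzy
  · have hmax₁ := isLocalMaxOn_left_of_glueAt Iio_subset_Iic_self hyz (hmax.on (Iio z))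
    exact h₁ φ hφ y (mem_univ y) ((hmax₁.isLocalMax (Iio_mem_nhds hyz)).on univ)
  · rcases le_total 0 (deriv φ y) with hp | hp
    · exact h₁.le_of_isLocalMaxOn_Iic hG hv₁ hφ
        (isLocalMaxOn_left_of_glueAt subset_rfl self_mem_Iic (hmax.on _)) hp
    · exact h₂.le_of_isLocalMaxOn_Ici hG hv₂ hφ
        (isLocalMaxOn_right_of_glueAt subset_rfl self_mem_Ici (hmax.on _)) hp
  · have hmax₂ := isLocalMaxOn_right_of_glueAt Ioi_subset_Ici_self hzy (hmax.on (Ioi z))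
    exact h₂ φ hφ y (mem_univ y) ((hmax₂.isLocalMax (Ioi_mem_nhds hzy)).on univ)

end Glue

/-- The increments `v y - v x` of the globally Lipschitz viscosity subsolutions `v` of
`G(Dv, ·) ≤ μ` on `ℝ`; `metricSol` is the real supremum of this set. -/
def subsolIncrements (G : ℝ → ℝ → ℝ) (μ y x : ℝ) : Set ℝ :=
  {r | ∃ v : ℝ → ℝ, IsLip v ∧ IsViscSubsol G μ univ v ∧ r = v y - v x}

section MaximalSubsolution

variable {G : ℝ → ℝ → ℝ} {μ x y z : ℝ} {m : ℝ → ℝ → ℝ}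

lemma add_mem_subsolIncrements (hG : QuasiconvexHam G) (hz : z ∈ uIcc x y) {r₁ r₂ : ℝ}
    (hr₁ : r₁ ∈ subsolIncrements G μ y z) (hr₂ : r₂ ∈ subsolIncrements G μ z x) :
    r₁ + r₂ ∈ subsolIncrements G μ y x := by
  obtain ⟨v₁, hv₁, hsub₁, rfl⟩ := hr₁
  obtain ⟨v₂, hv₂, hsub₂, rfl⟩ := hr₂
  have hc₁ : Continuous v₁ := hv₁.choose_spec.continuous
  have hc₂ : Continuous v₂ := hv₂.choose_spec.continuous
  rcases mem_uIcc.1 hz with ⟨hxz, hzy⟩ | ⟨hyz, hzx⟩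
  · refine ⟨glueAt z v₂ v₁, hv₂.glueAt hv₁ z, hsub₂.glueAt hG hsub₁ hc₂ hc₁ z, ?_⟩
    rw [glueAt_of_ge hzy, glueAt_of_le hxz]
    ring
  · refine ⟨glueAt z v₁ v₂, hv₁.glueAt hv₂ z, hsub₁.glueAt hG hsub₂ hc₁ hc₂ z, ?_⟩
    rw [glueAt_of_le hyz, glueAt_of_ge hzx]
    ring

lemma add_le_of_isLUB_subsolIncrements (hG : QuasiconvexHam G)
    (hm : ∀ y x, IsLUB (subsolIncrements G μ y x) (m y x)) (hz : z ∈ uIcc x y) :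
    m y z + m z x ≤ m y x := by
  refine ((hm y z).add (hm z x)).2 ?_
  rintro _ ⟨r₁, hr₁, r₂, hr₂, rfl⟩
  exact (hm y x).1 (add_mem_subsolIncrements hG hz hr₁ hr₂)

lemma le_add_of_isLUB_subsolIncrements
    (hm : ∀ y x, IsLUB (subsolIncrements G μ y x) (m y x)) (x y z : ℝ) :
    m y x ≤ m y z + m z x := by
  refine (hm y x).2 ?_
  rintro _ ⟨v, hv, hsub, rfl⟩
  have hyz := (hm y z).1 ⟨v, hv, hsub, rfl⟩
  have hzx := (hm z x).1 ⟨v, hv, hsub, rfl⟩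
  linarith

lemma continuous_of_isLUB_subsolIncrements
    (hm : ∀ y x, IsLUB (subsolIncrements G μ y x) (m y x)) {L : ℝ}
    (hupper : ∀ x y, m y x ≤ L * |y - x|) (x : ℝ) : Continuous fun y => m y x := by
  refine (LipschitzWith.of_le_add_mul' L fun y z => ?_).continuous
  calc m y x ≤ m y z + m z x := le_add_of_isLUB_subsolIncrements hm x y z
    _ ≤ m z x + L * dist y z := by
      rw [add_comm, Real.dist_eq]
      gcongr
      exact hupper z y

end MaximalSubsolution

-- `sSup` of an empty or unbounded set of reals is the junk value `0`; the lower bound excludes it.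
lemma isLUB_metricSol {H : ℝ → ℝ → Ω → ℝ} {μ l : ℝ} {ω : Ω} (hl : 0 < l)
    (hlower : ∀ x y, l * |y - x| ≤ metricSol H μ ω y x) (y x : ℝ) :
    IsLUB (subsolIncrements (fun p y => H p y ω) μ y x) (metricSol H μ ω y x) := by
  have hpos {y x : ℝ} (hyx : y ≠ x) : 0 < sSup (subsolIncrements (fun p y => H p y ω) μ y x) :=
    (mul_pos hl (abs_pos.2 (sub_ne_zero.2 hyx))).trans_le (hlower x y)
  obtain ⟨-, v, hv, hsub, -⟩ : (subsolIncrements (fun p y => H p y ω) μ 1 0).Nonempty := by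
    by_contra hempty
    simpa [not_nonempty_iff_eq_empty.1 hempty] using hpos one_ne_zero
  refine isLUB_csSup ⟨v y - v x, v, hv, hsub, rfl⟩ ?_
  rcases eq_or_ne y x with rfl | hyx
  · refine ⟨0, ?_⟩
    rintro _ ⟨v, -, -, rfl⟩
    exact (sub_self (v y)).le
  · by_contra hunbounded
    exact (hpos hyx).ne' (Real.sSup_of_not_bddAbove hunbounded)

theorem sublevel_sets_hausdorff_dist_general {H : ℝ → ℝ → Ω → ℝ} {ω : Ω}
    (hG : QuasiconvexHam fun p y => H p y ω) {μ : ℝ} (x : ℝ) {l L : ℝ} (hl : 0 < l)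
    (hsand : ∀ x' y : ℝ, l * |y - x'| ≤ metricSol H μ ω y x' ∧
      metricSol H μ ω y x' ≤ L * |y - x'|)
    {t s : ℝ} (ht : 0 ≤ t) (hts : t ≤ s) :
    Metric.hausdorffDist {y : ℝ | metricSol H μ ω y x ≤ t}
      {y : ℝ | metricSol H μ ω y x ≤ s} ≤ (s - t) / l := by
  have hm := isLUB_metricSol hl fun x' y => (hsand x' y).1
  have hcont := continuous_of_isLUB_subsolIncrements hm (fun x' y => (hsand x' y).2) x
  refine hausdorffDist_sublevel_le (x := x) hcont hl (fun y z hz => ?_) ?_ hts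
  · calc l * |y - z| ≤ metricSol H μ ω y z := (hsand z y).1
      _ ≤ metricSol H μ ω y x - metricSol H μ ω z x :=
        le_sub_iff_add_le.2 (add_le_of_isLUB_subsolIncrements hG hm (segment_eq_uIcc x y ▸ hz))
  · calc metricSol H μ ω x x ≤ L * |x - x| := (hsand x x).2
      _ ≤ t := by simpa using ht

/-- Hausdorff distance between the reachable (sublevel) sets of
the metric solution. -/
theorem sublevel_sets_hausdorff_dist [MeasurableSpace Ω] (H : ℝ → ℝ → Ω → ℝ)
    (hH : HamHyp H) (ω : Ω) (μ : ℝ) (hμ : fluxLimiter H ω < μ) (x : ℝ)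
    (l L : ℝ) (hl : 0 < l)
    (hsand : ∀ x' y : ℝ, l * |y - x'| ≤ metricSol H μ ω y x' ∧
      metricSol H μ ω y x' ≤ L * |y - x'|)
    (t s : ℝ) (ht : 0 ≤ t) (hts : t ≤ s) :
    Metric.hausdorffDist {y : ℝ | metricSol H μ ω y x ≤ t}
      {y : ℝ | metricSol H μ ω y x ≤ s} ≤ (s - t) / l :=
  sublevel_sets_hausdorff_dist_general (hH.quasiconvexHam ω) x hl hsand ht hts
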